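/- arXiv:2505.15225 — 4 statements merged into one kernel-verified Lean document; each statement's English description precedes it below -/
import Mathlib

section
/- Let ρ, λ, f : ℝ² → ℝ be infinitely differentiable functions of the variables (x,z). Define the first-order operators (A f)(x,z) = λ_z(x,z) f_x(x,z) − λ_x(x,z) f_z(x,z) and (B f)(x,z) = ρ_x(x,z) f_z(x,z) − ρ_z(x,z) f_x(x,z), and set ς(x,z) = ρ_x(x,z) λ_z(x,z) − ρ_z(x,z) λ_x(x,z). Then for all (x,z) ∈ ℝ², B(A f)(x,z) − A(B f)(x,z) = −(ς_x(x,z) f_z(x,z) − ς_z(x,z) f_x(x,z)). -/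
/-- Partial derivative with respect to the first variable `x`. -/
noncomputable def pX (f : ℝ × ℝ → ℝ) : ℝ × ℝ → ℝ :=
  fun p => deriv (fun x => f (x, p.2)) p.1

/-- Partial derivative with respect to the second variable `z`. -/
noncomputable def pZ (f : ℝ × ℝ → ℝ) : ℝ × ℝ → ℝ :=
  fun p => deriv (fun z => f (p.1, z)) p.2

/-- The operator `A f = λ_z f_x − λ_x f_z`. -/
noncomputable def opA (lam f : ℝ × ℝ → ℝ) : ℝ × ℝ → ℝ :=
  fun p => pZ lam p * pX f p - pX lam p * pZ f p

/-- The operator `B f = ρ_x f_z − ρ_z f_x`. -/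
noncomputable def opB (ρ f : ℝ × ℝ → ℝ) : ℝ × ℝ → ℝ :=
  fun p => pX ρ p * pZ f p - pZ ρ p * pX f p

/-- The weighted vorticity `ς = ρ_x λ_z − ρ_z λ_x`. -/
noncomputable def varsigma (ρ lam : ℝ × ℝ → ℝ) : ℝ × ℝ → ℝ :=
  fun p => pX ρ p * pZ lam p - pZ ρ p * pX lam p

lemma pX_eq {f : ℝ × ℝ → ℝ} (hf : Differentiable ℝ f) (p : ℝ × ℝ) :
    pX f p = fderiv ℝ f p (1, 0) := by
  have h1 : HasDerivAt (fun x : ℝ => (x, p.2)) ((1 : ℝ), (0 : ℝ)) p.1 :=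
    (hasDerivAt_id p.1).prodMk (hasDerivAt_const p.1 p.2)
  have h2 : HasFDerivAt f (fderiv ℝ f p) (p.1, p.2) := (hf p).hasFDerivAt
  exact (h2.comp_hasDerivAt p.1 h1).deriv

lemma pZ_eq {f : ℝ × ℝ → ℝ} (hf : Differentiable ℝ f) (p : ℝ × ℝ) :
    pZ f p = fderiv ℝ f p (0, 1) := by
  have h1 : HasDerivAt (fun z : ℝ => (p.1, z)) ((0 : ℝ), (1 : ℝ)) p.2 :=
    (hasDerivAt_const p.2 p.1).prodMk (hasDerivAt_id p.2)
  have h2 : HasFDerivAt f (fderiv ℝ f p) (p.1, p.2) := (hf p).hasFDerivAt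
  exact (h2.comp_hasDerivAt p.2 h1).deriv

lemma two_le_smooth : (2 : WithTop ℕ∞) ≤ ((⊤ : ℕ∞) : WithTop ℕ∞) :=
  WithTop.coe_le_coe.2 (le_top : (2 : ℕ∞) ≤ ⊤)

lemma smooth_diff {f : ℝ × ℝ → ℝ} (hf : ContDiff ℝ (⊤ : ℕ∞) f) : Differentiable ℝ f :=
  hf.differentiable (by simp)

lemma fderiv_diff {f : ℝ × ℝ → ℝ} (hf : ContDiff ℝ (⊤ : ℕ∞) f) :
    Differentiable ℝ (fderiv ℝ f) :=
  (hf.fderiv_right (m := 1) (by rw [one_add_one_eq_two]; exact two_le_smooth)).differentiable (by simp)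

lemma pX_diff {f : ℝ × ℝ → ℝ} (hf : ContDiff ℝ (⊤ : ℕ∞) f) : Differentiable ℝ (pX f) := by
  rw [funext (pX_eq (smooth_diff hf))]
  exact (fderiv_diff hf).clm_apply (differentiable_const _)

lemma pZ_diff {f : ℝ × ℝ → ℝ} (hf : ContDiff ℝ (⊤ : ℕ∞) f) : Differentiable ℝ (pZ f) := by
  rw [funext (pZ_eq (smooth_diff hf))]
  exact (fderiv_diff hf).clm_apply (differentiable_const _)

lemma pZ_pX {f : ℝ × ℝ → ℝ} (hf : ContDiff ℝ (⊤ : ℕ∞) f) (p : ℝ × ℝ) :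
    pZ (pX f) p = pX (pZ f) p := by
  rw [pZ_eq (pX_diff hf), pX_eq (pZ_diff hf), funext (pX_eq (smooth_diff hf)),
    funext (pZ_eq (smooth_diff hf)),
    fderiv_clm_apply (fderiv_diff hf p) (differentiableAt_const _),
    fderiv_clm_apply (fderiv_diff hf p) (differentiableAt_const _)]
  have h : IsSymmSndFDerivAt ℝ f p :=
    hf.contDiffAt.isSymmSndFDerivAt (by simpa using two_le_smooth)
  simpa using h.eq (0, 1) (1, 0)

lemma pX_comb {a b c d : ℝ × ℝ → ℝ} (ha : Differentiable ℝ a) (hb : Differentiable ℝ b)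
    (hc : Differentiable ℝ c) (hd : Differentiable ℝ d) (p : ℝ × ℝ) :
    pX (fun q => a q * b q - c q * d q) p =
      pX a p * b p + a p * pX b p - (pX c p * d p + c p * pX d p) := by
  change pX (a * b - c * d) p = _
  rw [pX_eq ((ha.mul hb).sub (hc.mul hd)), pX_eq ha, pX_eq hb, pX_eq hc, pX_eq hd,
    (((ha p).hasFDerivAt.mul (hb p).hasFDerivAt).sub
      ((hc p).hasFDerivAt.mul (hd p).hasFDerivAt)).fderiv]
  simp
  ring

lemma pZ_comb {a b c d : ℝ × ℝ → ℝ} (ha : Differentiable ℝ a) (hb : Differentiable ℝ b)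
    (hc : Differentiable ℝ c) (hd : Differentiable ℝ d) (p : ℝ × ℝ) :
    pZ (fun q => a q * b q - c q * d q) p =
      pZ a p * b p + a p * pZ b p - (pZ c p * d p + c p * pZ d p) := by
  change pZ (a * b - c * d) p = _
  rw [pZ_eq ((ha.mul hb).sub (hc.mul hd)), pZ_eq ha, pZ_eq hb, pZ_eq hc, pZ_eq hd,
    (((ha p).hasFDerivAt.mul (hb p).hasFDerivAt).sub
      ((hc p).hasFDerivAt.mul (hd p).hasFDerivAt)).fderiv]
  simp
  ring

/-- The commutator identity behind the coincidence of the pushed-forward Zakharov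
canonical Poisson tensor in Clebsch variables with Benjamin's Lie-Poisson tensor. -/
theorem clebsch_benjamin_commutator
    (ρ lam f : ℝ × ℝ → ℝ)
    (hρ : ContDiff ℝ (⊤ : ℕ∞) ρ) (hlam : ContDiff ℝ (⊤ : ℕ∞) lam) (hf : ContDiff ℝ (⊤ : ℕ∞) f) :
    ∀ p : ℝ × ℝ,
      opB ρ (opA lam f) p - opA lam (opB ρ f) p =
        -(pX (varsigma ρ lam) p * pZ f p - pZ (varsigma ρ lam) p * pX f p) := by
  intro p
  have rX := pX_diff hρ
  have rZ := pZ_diff hρ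
  have lX := pX_diff hlam
  have lZ := pZ_diff hlam
  have fX := pX_diff hf
  have fZ := pZ_diff hf
  have e1 : opB ρ (opA lam f) p =
    pX ρ p * pZ (opA lam f) p - pZ ρ p * pX (opA lam f) p := rfl
  have e2 : opA lam (opB ρ f) p =
    pZ lam p * pX (opB ρ f) p - pX lam p * pZ (opB ρ f) p := rfl
  rw [e1, e2]
  unfold opA opB varsigma
  rw [pX_comb lZ fX lX fZ, pZ_comb lZ fX lX fZ, pX_comb rX fZ rZ fX, pZ_comb rX fZ rZ fX,
    pX_comb rX lZ rZ lX, pZ_comb rX lZ rZ lX, pZ_pX hρ, pZ_pX hlam, pZ_pX hf]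
  ring
end

section
/- Let η, ū : ℝ² → ℝ be infinitely differentiable functions of (x,t) with η(x,t) > 0 for all (x,t), and assume the mass conservation equation η_t + (η ū)_x = 0 holds identically. Define v = (η³ ū_x)_x / (3η). Then pointwise on ℝ²: v_t + ū v_x + v ū_x + (1/2)(η² ū_x²)_x = (1/(3η)) ( η³ ( ū_{tx} + ū ū_{xx} − ū_x² ) )_x. -/
/-- Partial derivative in the spatial variable `x` (first argument). -/
noncomputable def dX (f : ℝ → ℝ → ℝ) : ℝ → ℝ → ℝ :=
  fun x t => deriv (fun x' => f x' t) x

/-- Partial derivative in time `t` (second argument). -/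
noncomputable def dT (f : ℝ → ℝ → ℝ) : ℝ → ℝ → ℝ :=
  fun x t => deriv (fun t' => f x t') t

def SmS (f : ℝ → ℝ → ℝ) : Prop := ContDiff ℝ (⊤ : ℕ∞) (fun p : ℝ × ℝ => f p.1 p.2)

lemma SmS.hx' {f : ℝ → ℝ → ℝ} (h : SmS f) (x t : ℝ) :
    HasDerivAt (fun x' => f x' t) (fderiv ℝ (fun p : ℝ × ℝ => f p.1 p.2) (x, t) (1, 0)) x := by
  have h1 : HasFDerivAt (fun p : ℝ × ℝ => f p.1 p.2) _ (x, t) :=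
    ((h.differentiable (by simp)) (x, t)).hasFDerivAt
  have h2 : HasDerivAt (fun x' : ℝ => (x', t)) ((1 : ℝ), (0 : ℝ)) x :=
    (hasDerivAt_id x).prodMk (hasDerivAt_const x t)
  exact h1.comp_hasDerivAt x h2

lemma SmS.ht' {f : ℝ → ℝ → ℝ} (h : SmS f) (x t : ℝ) :
    HasDerivAt (fun t' => f x t') (fderiv ℝ (fun p : ℝ × ℝ => f p.1 p.2) (x, t) (0, 1)) t := by
  have h1 : HasFDerivAt (fun p : ℝ × ℝ => f p.1 p.2) _ (x, t) :=
    ((h.differentiable (by simp)) (x, t)).hasFDerivAt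
  have h2 : HasDerivAt (fun t' : ℝ => (x, t')) ((0 : ℝ), (1 : ℝ)) t :=
    (hasDerivAt_const t x).prodMk (hasDerivAt_id t)
  exact h1.comp_hasDerivAt t h2

lemma SmS.dX_eq {f : ℝ → ℝ → ℝ} (h : SmS f) (x t : ℝ) :
    dX f x t = fderiv ℝ (fun p : ℝ × ℝ => f p.1 p.2) (x, t) (1, 0) := (h.hx' x t).deriv

lemma SmS.dT_eq {f : ℝ → ℝ → ℝ} (h : SmS f) (x t : ℝ) :
    dT f x t = fderiv ℝ (fun p : ℝ × ℝ => f p.1 p.2) (x, t) (0, 1) := (h.ht' x t).deriv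

lemma SmS.hx {f : ℝ → ℝ → ℝ} (h : SmS f) (x t : ℝ) :
    HasDerivAt (fun x' => f x' t) (dX f x t) x := by
  rw [h.dX_eq]; exact h.hx' x t

lemma SmS.ht {f : ℝ → ℝ → ℝ} (h : SmS f) (x t : ℝ) :
    HasDerivAt (fun t' => f x t') (dT f x t) t := by
  rw [h.dT_eq]; exact h.ht' x t

lemma SmS.fd {f : ℝ → ℝ → ℝ} (h : SmS f) :
    ContDiff ℝ (⊤ : ℕ∞) (fderiv ℝ (fun p : ℝ × ℝ => f p.1 p.2)) :=
  ContDiff.fderiv_right (n := (⊤ : ℕ∞)) h (by simp)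

lemma SmS.sX {f : ℝ → ℝ → ℝ} (h : SmS f) : SmS (dX f) := by
  unfold SmS
  simp only [h.dX_eq]
  exact h.fd.clm_apply contDiff_const

lemma SmS.sT {f : ℝ → ℝ → ℝ} (h : SmS f) : SmS (dT f) := by
  unfold SmS
  simp only [h.dT_eq]
  exact h.fd.clm_apply contDiff_const

lemma SmS.comm {f : ℝ → ℝ → ℝ} (h : SmS f) (x t : ℝ) :
    dT (dX f) x t = dX (dT f) x t := by
  rw [h.sX.dT_eq, h.sT.dX_eq]
  simp only [h.dX_eq, h.dT_eq]
  have hd : DifferentiableAt ℝ (fderiv ℝ (fun p : ℝ × ℝ => f p.1 p.2)) (x, t) :=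
    (h.fd.differentiable (by simp)) (x, t)
  rw [fderiv_clm_apply hd (by fun_prop), fderiv_clm_apply hd (by fun_prop)]
  have hs : IsSymmSndFDerivAt ℝ (fun p : ℝ × ℝ => f p.1 p.2) (x, t) :=
    (ContDiff.contDiffAt h).isSymmSndFDerivAt (by simp; exact WithTop.coe_le_coe.mpr le_top)
  simpa using hs.eq (0, 1) (1, 0)

/-- The core Appendix-A computation in the equivalence of the canonical Hamiltonian
system with the Serre–Green–Naghdi equations: the evolution of
`v = (η³ ū_x)_x/(3η)` reproduces exactly the SGN dispersive term. -/
theorem SGN_dispersive_term_identity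
    (η u : ℝ → ℝ → ℝ)
    (hη : ContDiff ℝ (⊤ : ℕ∞) (fun p : ℝ × ℝ => η p.1 p.2))
    (hu : ContDiff ℝ (⊤ : ℕ∞) (fun p : ℝ × ℝ => u p.1 p.2))
    (hηpos : ∀ x t, 0 < η x t)
    (hmass : ∀ x t, dT η x t + dX (fun x' t' => η x' t' * u x' t') x t = 0)
    (v : ℝ → ℝ → ℝ)
    (hv : v = fun x t => dX (fun x' t' => (η x' t')^3 * dX u x' t') x t / (3 * η x t)) :
    ∀ x t,
      dT v x t + u x t * dX v x t + v x t * dX u x t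
        + (1/2) * dX (fun x' t' => (η x' t')^2 * (dX u x' t')^2) x t
      = (1/(3 * η x t)) *
          dX (fun x' t' => (η x' t')^3 *
            (dT (dX u) x' t' + u x' t' * dX (dX u) x' t' - (dX u x' t')^2)) x t := by
  have sη : SmS η := hη
  have su : SmS u := hu
  have e1 : ∀ x t, dT η x t = -(dX η x t * u x t + η x t * dX u x t) := by
    intro x t
    have h1 : dX (fun x' t' => η x' t' * u x' t') x t = _ := ((sη.hx x t).mul (su.hx x t)).deriv
    have h2 := hmass x t
    rw [h1] at h2
    linarith
  have e2 : ∀ x t, dT (dX η) x t =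
      -(dX (dX η) x t * u x t + 2 * dX η x t * dX u x t + η x t * dX (dX u) x t) := by
    intro x t
    rw [sη.comm]
    have : dT η = fun x t => -(dX η x t * u x t + η x t * dX u x t) := by
      funext x t; exact e1 x t
    rw [this]
    have h1 : dX (fun x t => -(dX η x t * u x t + η x t * dX u x t)) x t = _ :=
      (((sη.sX.hx x t).mul (su.hx x t)).add ((sη.hx x t).mul (su.sX.hx x t))).neg.deriv
    rw [h1]; ring
  have ev : v = fun x t => η x t * dX η x t * dX u x t + η x t ^ 2 * dX (dX u) x t / 3 := by
    rw [hv]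
    funext x t
    have h1 : dX (fun x' t' => (η x' t')^3 * dX u x' t') x t = _ :=
      (((sη.hx x t).pow 3).mul (su.sX.hx x t)).deriv
    have := (hηpos x t).ne'
    rw [h1]
    simp only [Pi.pow_apply]
    field_simp
    norm_num
    try ring
  clear hv
  subst ev
  intro x t
  have hne := (hηpos x t).ne'
  have d1 : dT (fun x t => η x t * dX η x t * dX u x t + η x t ^ 2 * dX (dX u) x t / 3) x t = _ :=
    ((((sη.ht x t).mul (sη.sX.ht x t)).mul (su.sX.ht x t)).add
      ((((sη.ht x t).pow 2).mul (su.sX.sX.ht x t)).div_const 3)).deriv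
  have d2 : dX (fun x t => η x t * dX η x t * dX u x t + η x t ^ 2 * dX (dX u) x t / 3) x t = _ :=
    ((((sη.hx x t).mul (sη.sX.hx x t)).mul (su.sX.hx x t)).add
      ((((sη.hx x t).pow 2).mul (su.sX.sX.hx x t)).div_const 3)).deriv
  have d3 : dX (fun x' t' => (η x' t')^2 * (dX u x' t')^2) x t = _ :=
    (((sη.hx x t).pow 2).mul ((su.sX.hx x t).pow 2)).deriv
  have d4 : dX (fun x' t' => (η x' t')^3 *
      (dT (dX u) x' t' + u x' t' * dX (dX u) x' t' - (dX u x' t')^2)) x t = _ :=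
    (((sη.hx x t).pow 3).mul (((su.sX.sT.hx x t).add ((su.hx x t).mul (su.sX.sX.hx x t))).sub
      ((su.sX.hx x t).pow 2))).deriv
  rw [d1, d2, d3, d4]
  simp only [Pi.pow_apply, Pi.mul_apply, Pi.add_apply, Pi.sub_apply, e1, e2, su.sX.comm]
  field_simp
  norm_num
  ring
end

section
/- Let η, ū : ℝ² → ℝ be infinitely differentiable functions of (x,t), let h₁, ρ₂, g be real constants and ρ₁ ≠ 0 a real constant. For each real δ define σ_δ = −ρ₁ ū + (δ/3) h₁ ρ₂ (η ū)_{xx}. Then there exist infinitely differentiable functions R₂, R₃ : ℝ² → ℝ, independent of δ, such that for every real δ and every (x,t): (σ_δ)_t − (h₁/ρ₁) σ_δ (σ_δ)_x − g h₁² (ρ₂ − ρ₁) η_x − (δ/3)(h₁² ρ₂/ρ₁²) ( σ_δ (η σ_δ)_{xx} )_x = −ρ₁ [ ū_t + h₁ ū ū_x + g h₁² (ρ₂/ρ₁ − 1) η_x − (δ/3)(h₁ ρ₂/ρ₁) (η ū)_{xxt} ] + δ² R₂(x,t) + δ³ R₃(x,t). In particular the second 'deep-water' Hamiltonian evolution equation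 for (η, σ) is equivalent, at order O(δ), to the second Boussinesq-type equation ū_t + h₁ ū ū_x + g h₁²(ρ₂/ρ₁ − 1) η_x − (δ/3) h₁ (ρ₂/ρ₁)(η ū)_{xxt} = 0. -/
/-- The tangential momentum shear of the deep-water regime,
`σ_δ = −ρ₁ ū + (δ/3) h₁ ρ₂ (η ū)_{xx}`. -/
noncomputable def sigmaDW (ρ₁ h₁ ρ₂ : ℝ) (η u : ℝ → ℝ → ℝ) (δ : ℝ) : ℝ → ℝ → ℝ :=
  fun x t => -ρ₁ * u x t
    + (δ/3) * h₁ * ρ₂ * dX (dX (fun x' t' => η x' t' * u x' t')) x t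

def Sm (f : ℝ → ℝ → ℝ) : Prop := ContDiff ℝ (⊤ : ℕ∞) (fun p : ℝ × ℝ => f p.1 p.2)

theorem Sm.sliceX {f : ℝ → ℝ → ℝ} (hf : Sm f) (x t : ℝ) :
    DifferentiableAt ℝ (fun x' => f x' t) x := by
  have h : ContDiff ℝ (⊤ : ℕ∞) (fun x' : ℝ => f x' t) :=
    ContDiff.comp (g := fun p : ℝ × ℝ => f p.1 p.2) hf
      (contDiff_id.prodMk contDiff_const : ContDiff ℝ (⊤ : ℕ∞) (fun x' : ℝ => (x', t)))
  exact (h.differentiable (by simp)) x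

theorem Sm.sliceT {f : ℝ → ℝ → ℝ} (hf : Sm f) (x t : ℝ) :
    DifferentiableAt ℝ (fun t' => f x t') t := by
  have h : ContDiff ℝ (⊤ : ℕ∞) (fun t' : ℝ => f x t') :=
    ContDiff.comp (g := fun p : ℝ × ℝ => f p.1 p.2) hf
      (contDiff_const.prodMk contDiff_id : ContDiff ℝ (⊤ : ℕ∞) (fun t' : ℝ => (x, t')))
  exact (h.differentiable (by simp)) t

theorem Sm.dX {f : ℝ → ℝ → ℝ} (hf : Sm f) : Sm (dX f) := by
  have hf' : ContDiff ℝ (⊤ : ℕ∞) (fun p : ℝ × ℝ => f p.1 p.2) := hf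
  have key : (fun p : ℝ × ℝ => _root_.dX f p.1 p.2)
      = fun p => fderiv ℝ (fun p : ℝ × ℝ => f p.1 p.2) p ((1 : ℝ), (0 : ℝ)) := by
    funext p
    have h1 : HasFDerivAt (fun p : ℝ × ℝ => f p.1 p.2)
        (fderiv ℝ (fun p : ℝ × ℝ => f p.1 p.2) p) (p.1, p.2) :=
      (hf'.differentiable (by simp) p).hasFDerivAt
    have h2 : HasDerivAt (fun x' : ℝ => (x', p.2)) ((1 : ℝ), (0 : ℝ)) p.1 :=
      (hasDerivAt_id p.1).prodMk (hasDerivAt_const p.1 p.2)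
    exact (h1.comp_hasDerivAt p.1 h2).deriv
  unfold Sm
  rw [key]
  exact (hf'.fderiv_right (m := ((⊤ : ℕ∞) : WithTop ℕ∞)) (by simp)).clm_apply contDiff_const

theorem Sm.mul {f k : ℝ → ℝ → ℝ} (hf : Sm f) (hk : Sm k) :
    Sm (fun x t => f x t * k x t) := ContDiff.mul hf hk

theorem Sm.add {f k : ℝ → ℝ → ℝ} (hf : Sm f) (hk : Sm k) :
    Sm (fun x t => f x t + k x t) := ContDiff.add hf hk

theorem Sm.cmul {f : ℝ → ℝ → ℝ} (a : ℝ) (hf : Sm f) :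
    Sm (fun x t => a * f x t) := ContDiff.mul contDiff_const hf

theorem dX_lin {f k : ℝ → ℝ → ℝ} (hf : Sm f) (hk : Sm k) (a b : ℝ) :
    dX (fun x t => a * f x t + b * k x t) = fun x t => a * dX f x t + b * dX k x t := by
  funext x t
  exact (((hf.sliceX x t).hasDerivAt.const_mul a).add
    ((hk.sliceX x t).hasDerivAt.const_mul b)).deriv

theorem dT_lin {f k : ℝ → ℝ → ℝ} (hf : Sm f) (hk : Sm k) (a b : ℝ) :
    dT (fun x t => a * f x t + b * k x t) = fun x t => a * dT f x t + b * dT k x t := by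
  funext x t
  exact (((hf.sliceT x t).hasDerivAt.const_mul a).add
    ((hk.sliceT x t).hasDerivAt.const_mul b)).deriv

theorem dX_mul {f k : ℝ → ℝ → ℝ} (hf : Sm f) (hk : Sm k) :
    dX (fun x t => f x t * k x t) = fun x t => dX f x t * k x t + f x t * dX k x t := by
  funext x t
  exact ((hf.sliceX x t).hasDerivAt.mul (hk.sliceX x t).hasDerivAt).deriv

/-- The second deep-water Hamiltonian evolution equation agrees, at order `O(δ)`,
with the second Boussinesq-type equation: the discrepancy is an explicit
combination `δ²R₂ + δ³R₃` with `R₂, R₃` smooth and independent of `δ`. -/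
theorem deep_water_momentum_equation_delta_expansion
    (η u : ℝ → ℝ → ℝ)
    (hη : ContDiff ℝ (⊤ : ℕ∞) (fun p : ℝ × ℝ => η p.1 p.2))
    (hu : ContDiff ℝ (⊤ : ℕ∞) (fun p : ℝ × ℝ => u p.1 p.2))
    (h₁ ρ₂ g ρ₁ : ℝ) (hρ₁ : ρ₁ ≠ 0) :
    ∃ R₂ R₃ : ℝ → ℝ → ℝ,
      ContDiff ℝ (⊤ : ℕ∞) (fun p : ℝ × ℝ => R₂ p.1 p.2) ∧
      ContDiff ℝ (⊤ : ℕ∞) (fun p : ℝ × ℝ => R₃ p.1 p.2) ∧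
      ∀ δ x t,
        dT (sigmaDW ρ₁ h₁ ρ₂ η u δ) x t
          - (h₁/ρ₁) * sigmaDW ρ₁ h₁ ρ₂ η u δ x t * dX (sigmaDW ρ₁ h₁ ρ₂ η u δ) x t
          - g * h₁^2 * (ρ₂ - ρ₁) * dX η x t
          - (δ/3) * (h₁^2 * ρ₂ / ρ₁^2) *
              dX (fun x' t' => sigmaDW ρ₁ h₁ ρ₂ η u δ x' t' *
                dX (dX (fun y s => η y s * sigmaDW ρ₁ h₁ ρ₂ η u δ y s)) x' t') x t
        = -ρ₁ * (dT u x t + h₁ * u x t * dX u x t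
              + g * h₁^2 * (ρ₂/ρ₁ - 1) * dX η x t
              - (δ/3) * (h₁ * ρ₂ / ρ₁) *
                  dT (dX (dX (fun x' t' => η x' t' * u x' t'))) x t)
          + δ^2 * R₂ x t + δ^3 * R₃ x t := by
  have su : Sm u := hu
  have se : Sm η := hη
  obtain ⟨m, hm⟩ : ∃ m, m = dX (dX (fun x' t' => η x' t' * u x' t')) := ⟨_, rfl⟩
  have sm : Sm m := hm ▸ (se.mul su).dX.dX
  obtain ⟨n, hn⟩ : ∃ n, n = dX (dX (fun x' t' => η x' t' * m x' t')) := ⟨_, rfl⟩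
  have sn : Sm n := hn ▸ (se.mul sm).dX.dX
  have hσ : ∀ δ, sigmaDW ρ₁ h₁ ρ₂ η u δ
      = fun x t => (-ρ₁) * u x t + ((δ/3) * h₁ * ρ₂) * m x t := by
    intro δ
    rw [hm]
    rfl
  have hησ : ∀ a b : ℝ, dX (dX (fun y s => η y s * (a * u y s + b * m y s)))
      = fun x t => a * m x t + b * n x t := by
    intro a b
    have e : (fun y s => η y s * (a * u y s + b * m y s))
        = fun y s => a * (η y s * u y s) + b * (η y s * m y s) := by
      funext y s
      ring
    rw [e, dX_lin (se.mul su) (se.mul sm), dX_lin (se.mul su).dX (se.mul sm).dX, hm, hn, hm]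
  refine ⟨fun x t => (-(h₁/ρ₁) * (h₁*ρ₂/3)^2) * (m x t * dX m x t)
      + (h₁ * (h₁*ρ₂/3)^2 / ρ₁) * ((dX u x t * n x t + u x t * dX n x t)
        + (dX m x t * m x t + m x t * dX m x t)),
    fun x t => (-(h₁ * (h₁*ρ₂/3)^3 / ρ₁^2)) * (dX m x t * n x t + m x t * dX n x t), ?_, ?_, ?_⟩
  · exact ((sm.mul sm.dX).cmul _).add ((((su.dX.mul sn).add (su.mul sn.dX)).add
      ((sm.dX.mul sm).add (sm.mul sm.dX))).cmul _)
  · exact ((sm.dX.mul sn).add (sm.mul sn.dX)).cmul _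
  · intro δ x t
    rw [hσ δ, ← hm]
    simp only [hησ]
    rw [dX_mul ((su.cmul _).add (sm.cmul _)) ((sm.cmul _).add (sn.cmul _)),
      dX_lin su sm, dX_lin sm sn, dT_lin su sm]
    field_simp
    ring
end

section
/- Let ρ ≠ 0 and ε be real constants, let ū : ℝ → ℝ be infinitely differentiable with compact support, and let η : ℝ → ℝ be infinitely differentiable with η(x) > 0 for all x. Define v = (η³ ū')' / (3η) and μ_ε = ρ( ū − ε² v ). Then ∫_ℝ (1/ρ)( η μ_ε² − (ε²/3) η³ (μ_ε')² ) dx = ∫_ℝ ρ ( η ū² + (ε²/3) η³ (ū')² ) dx + ε⁴ ∫_ℝ ρ ( η v² + (2/3) η³ ū' v' ) dx − (ε⁶/3) ∫_ℝ ρ η³ (v')² dx. -/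
theorem integral_lin_aux (A B C D : ℝ → ℝ) (b c d : ℝ)
    (iA : MeasureTheory.Integrable A) (iB : MeasureTheory.Integrable B)
    (iC : MeasureTheory.Integrable C) (iD : MeasureTheory.Integrable D) :
    (∫ x : ℝ, (A x + b * B x - c * C x - d * D x))
      = (∫ x : ℝ, A x) + b * (∫ x : ℝ, B x) - c * (∫ x : ℝ, C x) - d * (∫ x : ℝ, D x) := by
  have jB := iB.const_mul b
  have jC := iC.const_mul c
  have jD := iD.const_mul d
  have h1 : MeasureTheory.Integrable (fun x => A x + b * B x) := iA.add jB
  have h2 : MeasureTheory.Integrable (fun x => A x + b * B x - c * C x) := h1.sub jC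
  rw [MeasureTheory.integral_sub h2 jD, MeasureTheory.integral_sub h1 jC,
    MeasureTheory.integral_add iA jB]
  simp only [MeasureTheory.integral_const_mul]

/-- The canonical water-wave Hamiltonian density, expressed through
`μ_ε = ρ(ū − ε²v)` with `v = (η³ū')'/(3η)`, coincides with the
Serre–Green–Naghdi energy up to explicit `O(ε⁴)` terms. -/
theorem canonical_energy_equals_SGN_energy
    (ρ ε : ℝ) (hρ : ρ ≠ 0)
    (u : ℝ → ℝ) (hu : ContDiff ℝ (⊤ : ℕ∞) u) (husupp : HasCompactSupport u)
    (η : ℝ → ℝ) (hη : ContDiff ℝ (⊤ : ℕ∞) η) (hηpos : ∀ x, 0 < η x)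
    (v : ℝ → ℝ)
    (hv : v = fun x => deriv (fun y => (η y)^3 * deriv u y) x / (3 * η x))
    (μ : ℝ → ℝ)
    (hμ : μ = fun x => ρ * (u x - ε^2 * v x)) :
    (∫ x : ℝ, (1/ρ) * (η x * (μ x)^2 - (ε^2/3) * (η x)^3 * (deriv μ x)^2))
    = (∫ x : ℝ, ρ * (η x * (u x)^2 + (ε^2/3) * (η x)^3 * (deriv u x)^2))
      + ε^4 * (∫ x : ℝ, ρ * (η x * (v x)^2 + (2/3) * (η x)^3 * deriv u x * deriv v x))
      - (ε^6/3) * (∫ x : ℝ, ρ * (η x)^3 * (deriv v x)^2) := by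
  have hu' : ContDiff ℝ (⊤ : ℕ∞) (deriv u) := (contDiff_infty_iff_deriv.1 hu).2
  have hw : ContDiff ℝ (⊤ : ℕ∞) (fun y => (η y)^3 * deriv u y) := (hη.pow 3).mul hu'
  have hw' := (contDiff_infty_iff_deriv.1 hw).2
  have hvs : ContDiff ℝ (⊤ : ℕ∞) v := by
    rw [hv]
    exact hw'.div (contDiff_const.mul hη) (fun x => by have := hηpos x; positivity)
  have hv' := (contDiff_infty_iff_deriv.1 hvs).2
  have cu := hu.continuous
  have cu' := hu'.continuous
  have cη := hη.continuous
  have cv := hvs.continuous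
  have cv' := hv'.continuous
  have su' : HasCompactSupport (deriv u) := husupp.deriv
  have sw : HasCompactSupport (fun y => (η y)^3 * deriv u y) := su'.mul_left
  have sv : HasCompactSupport v := by
    rw [hv]
    simp only [div_eq_mul_inv]
    exact sw.deriv.mul_right
  have sv' : HasCompactSupport (deriv v) := sv.deriv
  have hvw : ∀ x, deriv (fun y => (η y)^3 * deriv u y) x = 3 * η x * v x := by
    intro x
    have := (hηpos x).ne'
    rw [hv]
    field_simp
  have hdμ : ∀ x, deriv μ x = ρ * (deriv u x - ε^2 * deriv v x) := by
    intro x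
    rw [hμ]
    have h1 := (hu.differentiable (by simp) x).hasDerivAt
    have h2 := (hvs.differentiable (by simp) x).hasDerivAt
    exact ((h1.sub (h2.const_mul (ε^2))).const_mul ρ).deriv
  -- integrability from continuity and vanishing off a compact set
  have key : ∀ f : ℝ → ℝ, Continuous f →
      (∀ x, u x = 0 → deriv u x = 0 → v x = 0 → deriv v x = 0 → f x = 0) →
      MeasureTheory.Integrable f := by
    intro f cf hf
    apply cf.integrable_of_hasCompactSupport
    refine HasCompactSupport.intro
      (((husupp.isCompact.union su'.isCompact).union sv.isCompact).union sv'.isCompact) ?_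
    intro x hx
    simp only [Set.mem_union, not_or] at hx
    exact hf x (image_eq_zero_of_notMem_tsupport hx.1.1.1)
      (image_eq_zero_of_notMem_tsupport hx.1.1.2)
      (image_eq_zero_of_notMem_tsupport hx.1.2)
      (image_eq_zero_of_notMem_tsupport hx.2)
  have iA : MeasureTheory.Integrable
      (fun x => ρ * (η x * (u x)^2 + (ε^2/3) * (η x)^3 * (deriv u x)^2)) :=
    key _ (by fun_prop) (by intro x h1 h2 h3 h4; simp [h1, h2])
  have iB : MeasureTheory.Integrable
      (fun x => ρ * (η x * (v x)^2 + (2/3) * (η x)^3 * deriv u x * deriv v x)) :=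
    key _ (by fun_prop) (by intro x h1 h2 h3 h4; simp [h2, h3])
  have iC : MeasureTheory.Integrable (fun x => ρ * (η x)^3 * (deriv v x)^2) :=
    key _ (by fun_prop) (by intro x h1 h2 h3 h4; simp [h4])
  have iD : MeasureTheory.Integrable
      (fun x => deriv u x * ((η x)^3 * deriv u x) + u x * (3 * η x * v x)) :=
    key _ (by fun_prop) (by intro x h1 h2 h3 h4; simp [h1, h2])
  have iF : MeasureTheory.Integrable (fun x => u x * ((η x)^3 * deriv u x)) :=
    key _ (by fun_prop) (by intro x h1 h2 h3 h4; simp [h1])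
  have hD : ∫ x : ℝ, (deriv u x * ((η x)^3 * deriv u x) + u x * (3 * η x * v x)) = 0 := by
    refine MeasureTheory.integral_eq_zero_of_hasDerivAt_of_integrable (fun x => ?_) iD iF
    have h1 := (hu.differentiable (by simp) x).hasDerivAt
    have h2 := (hw.differentiable (by simp) x).hasDerivAt
    rw [hvw x] at h2
    exact h1.mul h2
  have e : ∀ x, (1/ρ) * (η x * (μ x)^2 - (ε^2/3) * (η x)^3 * (deriv μ x)^2)
      = ρ * (η x * (u x)^2 + (ε^2/3) * (η x)^3 * (deriv u x)^2)
        + ε^4 * (ρ * (η x * (v x)^2 + (2/3) * (η x)^3 * deriv u x * deriv v x))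
        - (ε^6/3) * (ρ * (η x)^3 * (deriv v x)^2)
        - (2*ε^2/3*ρ) * (deriv u x * ((η x)^3 * deriv u x) + u x * (3 * η x * v x)) := by
    intro x
    rw [hdμ x, show μ x = ρ * (u x - ε^2 * v x) by rw [hμ]]
    field_simp
    ring
  simp_rw [e]
  have lin := integral_lin_aux _ _ _ _ (ε^4) (ε^6/3) (2*ε^2/3*ρ) iA iB iC iD
  rw [hD, mul_zero, sub_zero] at lin
  exact lin
end
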